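/- Let n ≥ 3, let r be an integer with 1 ≤ r ≤ n − 2, and let p₁, …, pₙ be distinct prime numbers. For each i ∈ {1, …, n}, let bᵢ be the unique integer with 0 ≤ bᵢ < pᵢ and bᵢ · ∏_{j ≠ i} pⱼ ≡ −1 (mod pᵢ). If there exists k ∈ {1, …, n} such that bᵢ = pᵢ − 1 for all i ≠ k and ∑_{i ≠ k} 1/pᵢ ≤ 1, then the dilation rΔ(p₁, …, pₙ) is not normal. -/

import Mathlib

/-- A point of `ℝⁿ` is a lattice point if all its coordinates are integers. -/
def IsLatticePoint {n : ℕ} (x : Fin n → ℝ) : Prop := ∀ i, ∃ z : ℤ, x i = (z : ℝ)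

/-- The `k`-th dilation `kS = {k • x : x ∈ S}` of a set `S ⊆ ℝⁿ`. -/
def dilate {n : ℕ} (k : ℕ) (P : Set (Fin n → ℝ)) : Set (Fin n → ℝ) :=
  (fun x => (k : ℝ) • x) '' P

/-- Every lattice point of `kP` is a sum of `k` lattice points of `P`. -/
def IsIDP {n : ℕ} (k : ℕ) (P : Set (Fin n → ℝ)) : Prop :=
  ∀ x ∈ dilate k P, IsLatticePoint x →
    ∃ f : Fin k → (Fin n → ℝ), (∀ i, f i ∈ P ∧ IsLatticePoint (f i)) ∧ x = ∑ i, f i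

/-- A polytope is normal if for every `k ≥ 1` every lattice point of `kP`
is a sum of `k` lattice points of `P`. -/
def IsNormal {n : ℕ} (P : Set (Fin n → ℝ)) : Prop := ∀ k : ℕ, 1 ≤ k → IsIDP k P

/-- A polytope is very ample if there is `k₀` such that for every `k ≥ k₀` every
lattice point of `kP` is a sum of `k` lattice points of `P`. -/
def IsVeryAmple {n : ℕ} (P : Set (Fin n → ℝ)) : Prop :=
  ∃ k₀ : ℕ, ∀ k : ℕ, k₀ ≤ k → IsIDP k P

/-- The rectangular simplex `Δ(λ) = conv{0, λ₁e₁, …, λₙeₙ}`. -/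
def rectSimplex {n : ℕ} (lam : Fin n → ℕ) : Set (Fin n → ℝ) :=
  convexHull ℝ (insert 0 (Set.range fun i => Pi.single i ((lam i : ℝ))))

/-- An edge of `P`: a segment between two distinct extreme points of `P`
which is an extreme subset of `P`. -/
def IsEdge {n : ℕ} (P : Set (Fin n → ℝ)) (v w : Fin n → ℝ) : Prop :=
  v ≠ w ∧ v ∈ P.extremePoints ℝ ∧ w ∈ P.extremePoints ℝ ∧
    IsExtreme ℝ P (segment ℝ v w)

/-- `P` has at least `k` lattice points on every edge. -/
def LPE {n : ℕ} (k : ℕ) (P : Set (Fin n → ℝ)) : Prop :=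
  ∀ v w, IsEdge P v w →
    ∃ S : Finset (Fin n → ℝ), k ≤ S.card ∧ ∀ x ∈ S, x ∈ segment ℝ v w ∧ IsLatticePoint x

/-- The normality index: the least `k₀` such that `kP` is normal for all `k ≥ k₀`. -/
noncomputable def munorm {n : ℕ} (P : Set (Fin n → ℝ)) : ℕ :=
  sInf {k₀ : ℕ | ∀ k : ℕ, k₀ ≤ k → IsNormal (dilate k P)}

/-- Almost 1-normality: with `L = lcm λᵢ`, `Lᵢ = L/λᵢ`, `d = gcd Lᵢ`, the number
`L - d` lies in the additive submonoid of `ℕ` generated by the `Lᵢ`. -/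
def IsA1N {n : ℕ} (lam : Fin n → ℕ) : Prop :=
  Finset.univ.lcm lam - Finset.univ.gcd (fun i => Finset.univ.lcm lam / lam i) ∈
    AddSubmonoid.closure (Set.range fun i => Finset.univ.lcm lam / lam i)

/-!
Let `N = ∏ pᵢ` and `ℓ(x) = N · ∑ xᵢ / pᵢ`, an integral linear form with
`rΔ(p) = {x ≥ 0 | ℓ(x) ≤ rN}`. Modulo `pᵢ` the value `ℓ(x)` determines `xᵢ`, so a nonnegative
lattice point `x` with `ℓ(x) ≡ -1 (mod N)` has `xᵢ ≡ bᵢ (mod pᵢ)`, hence `x ≥ b` and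
`ℓ(x) ≥ ℓ(b)`. Write `ℓ(b) = tN - 1`. If `r < t`, then `rΔ(p)` has no lattice point at the level
`rN - 1`. But `b + (tr - t) pₖ eₖ` is a lattice point of `t(rΔ(p))` at the level `t(rN) - 1`, and
in a decomposition of it into `t` lattice points of `rΔ(p)` one summand has level `rN - 1`.
-/

section FacetForm

variable {ι : Type*} [Fintype ι] [DecidableEq ι] {p b : ι → ℕ}

/-- The product `∏_{j ≠ i} pⱼ` of all the entries of `p` but the `i`-th. -/
def cofactor (p : ι → ℕ) (i : ι) : ℤ := ∏ j ∈ Finset.univ.erase i, (p j : ℤ)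

/-- The linear form `z ↦ ∑ zᵢ ∏_{j ≠ i} pⱼ`, that is, `∑ zᵢ / pᵢ` with denominators cleared. It is
constant on the facet of `Δ(p)` that does not contain the origin. -/
def facetForm (p : ι → ℕ) : (ι → ℤ) →ₗ[ℤ] ℤ := Fintype.linearCombination ℤ (cofactor p)

lemma facetForm_apply (z : ι → ℤ) : facetForm p z = ∑ i, z i * cofactor p i := rfl

lemma mul_cofactor (p : ι → ℕ) (i : ι) : (p i : ℤ) * cofactor p i = ∏ j, (p j : ℤ) :=
  Finset.mul_prod_erase _ (fun j => (p j : ℤ)) (Finset.mem_univ i)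

lemma facetForm_single (i : ι) (a : ℤ) :
    facetForm p (Pi.single i a) = a * cofactor p i := by
  simp [facetForm]

lemma facetForm_mono (p : ι → ℕ) : Monotone (facetForm p) := fun _ _ h =>
  Finset.sum_le_sum fun i _ =>
    mul_le_mul_of_nonneg_right (h i) (Finset.prod_nonneg fun j _ => Int.natCast_nonneg (p j))

lemma sum_div_eq_facetForm_div_prod (hp : ∀ i, 0 < p i) (z : ι → ℤ) :
    ∑ i, (z i : ℝ) / p i = facetForm p z / ∏ i, (p i : ℝ) := by
  rw [facetForm_apply, Int.cast_sum, Finset.sum_div]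
  refine Finset.sum_congr rfl fun i _ => ?_
  have hpi : (p i : ℝ) ≠ 0 := by exact_mod_cast (hp i).ne'
  have hprod : (∏ j, (p j : ℝ)) ≠ 0 :=
    Finset.prod_ne_zero_iff.2 fun j _ => by exact_mod_cast (hp j).ne'
  have hmul : (p i : ℝ) * cofactor p i = ∏ j, (p j : ℝ) := by exact_mod_cast mul_cofactor p i
  rw [div_eq_div_iff hpi hprod, ← hmul, Int.cast_mul]
  ring

lemma facetForm_modEq (p : ι → ℕ) (z : ι → ℤ) (i : ι) :
    facetForm p z ≡ z i * cofactor p i [ZMOD p i] := by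
  rw [facetForm_apply, ← Finset.add_sum_erase _ _ (Finset.mem_univ i)]
  have hdvd : (p i : ℤ) ∣ ∑ l ∈ Finset.univ.erase i, z l * cofactor p l :=
    Finset.dvd_sum fun l hl => Dvd.dvd.mul_left (Finset.dvd_prod_of_mem (fun j => (p j : ℤ))
      (Finset.mem_erase.2 ⟨(Finset.ne_of_mem_erase hl).symm, Finset.mem_univ i⟩)) _
  simpa using (Int.modEq_zero_iff_dvd.2 hdvd).add_left (z i * cofactor p i)

lemma isCoprime_of_mul_modEq_neg_one {a m c : ℤ} (h : a * c ≡ -1 [ZMOD m]) : IsCoprime m c := by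
  obtain ⟨e, he⟩ := h.dvd
  exact ⟨-e, -a, by linear_combination he⟩

lemma prod_dvd_facetForm_add_one
    (hb : ∀ i, (b i : ℤ) * cofactor p i ≡ -1 [ZMOD p i]) :
    (∏ i, (p i : ℤ)) ∣ facetForm p (fun i => b i) + 1 := by
  refine Finset.prod_dvd_of_coprime (fun i _ j _ hij => ?_) fun i _ => ?_
  · exact (isCoprime_of_mul_modEq_neg_one (hb i)).of_prod_right j
      (Finset.mem_erase.2 ⟨hij.symm, Finset.mem_univ j⟩)
  · refine Int.modEq_zero_iff_dvd.1 ?_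
    simpa using ((facetForm_modEq p (fun i => (b i : ℤ)) i).trans (hb i)).add_right 1

lemma le_of_facetForm_modEq_neg_one (hbp : ∀ i, b i < p i)
    (hb : ∀ i, (b i : ℤ) * cofactor p i ≡ -1 [ZMOD p i])
    {z : ι → ℤ} (hz : 0 ≤ z) (hmod : facetForm p z ≡ -1 [ZMOD ∏ i, (p i : ℤ)]) :
    (fun i => (b i : ℤ)) ≤ z := by
  intro i
  have hmul : z i * cofactor p i ≡ b i * cofactor p i [ZMOD p i] :=
    ((facetForm_modEq p z i).symm.trans (hmod.of_dvd ⟨_, (mul_cofactor p i).symm⟩)).trans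
      (hb i).symm
  have hdvd : (p i : ℤ) ∣ b i - z i :=
    (isCoprime_of_mul_modEq_neg_one (hb i)).dvd_of_dvd_mul_right
      (by simpa only [sub_mul] using hmul.dvd)
  by_contra! hlt
  have hp_le : (p i : ℤ) ≤ b i - z i := Int.le_of_dvd (sub_pos.2 hlt) hdvd
  have hb_lt : (b i : ℤ) < p i := by exact_mod_cast hbp i
  have hz_nonneg : 0 ≤ z i := hz i
  omega

lemma facetForm_ne_mul_prod_sub_one (hbp : ∀ i, b i < p i)
    (hb : ∀ i, (b i : ℤ) * cofactor p i ≡ -1 [ZMOD p i])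
    {r t : ℕ} (ht : facetForm p (fun i => b i) = t * ∏ i, (p i : ℤ) - 1) (hrt : r < t)
    {z : ι → ℤ} (hz : 0 ≤ z) : facetForm p z ≠ r * ∏ i, (p i : ℤ) - 1 := by
  intro hlevel
  have hprod : 0 < ∏ i, (p i : ℤ) :=
    Finset.prod_pos fun i _ => by exact_mod_cast Nat.zero_lt_of_lt (hbp i)
  have hmod : facetForm p z ≡ -1 [ZMOD ∏ i, (p i : ℤ)] :=
    Int.modEq_iff_dvd.2 ⟨-r, by rw [hlevel]; ring⟩
  have hle := facetForm_mono p (le_of_facetForm_modEq_neg_one hbp hb hz hmod)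
  have hlt : (r : ℤ) * ∏ i, (p i : ℤ) < t * ∏ i, (p i : ℤ) :=
    mul_lt_mul_of_pos_right (by exact_mod_cast hrt) hprod
  linarith

lemma exists_nonneg_facetForm_eq_mul_prod_sub_one (k : ι) {t s : ℕ}
    (ht : facetForm p (fun i => b i) = t * ∏ i, (p i : ℤ) - 1) (hts : t ≤ s) :
    ∃ x : ι → ℤ, 0 ≤ x ∧ facetForm p x = s * ∏ i, (p i : ℤ) - 1 := by
  refine ⟨(fun i => (b i : ℤ)) + Pi.single k (((s - t : ℕ) : ℤ) * p k), ?_, ?_⟩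
  · exact add_nonneg (fun i => Int.natCast_nonneg _) (Pi.single_nonneg.2 (by positivity))
  · rw [map_add, ht, facetForm_single, mul_assoc, mul_cofactor, Nat.cast_sub hts]
    ring

lemma card_sub_two_le_sum_div {k : ι} (hp : ∀ i, i ≠ k → 0 < p i)
    (hb : ∀ i, i ≠ k → b i = p i - 1)
    (hsum : ∑ i ∈ Finset.univ.erase k, (1 : ℝ) / p i ≤ 1) :
    (Fintype.card ι : ℝ) - 2 ≤ ∑ i, (b i : ℝ) / p i := by
  have hterm : ∀ i ∈ Finset.univ.erase k, (b i : ℝ) / p i = 1 - 1 / p i := fun i hi => by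
    have hik := Finset.ne_of_mem_erase hi
    have hpi : (p i : ℝ) ≠ 0 := by exact_mod_cast (hp i hik).ne'
    rw [hb i hik, Nat.cast_pred (hp i hik), sub_div, div_self hpi]
  have hcard : ((Finset.univ.erase k).card : ℝ) = Fintype.card ι - 1 := by
    rw [Finset.cast_card_erase_of_mem (Finset.mem_univ k), Finset.card_univ]
  have hk : (0 : ℝ) ≤ b k / p k := by positivity
  rw [← Finset.add_sum_erase _ _ (Finset.mem_univ k), Finset.sum_congr rfl hterm,
    Finset.sum_sub_distrib, Finset.sum_const, nsmul_one, hcard]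
  linarith

end FacetForm

lemma exists_eq_sub_one_of_sum_eq {κ : Type*} [Fintype κ] {w : κ → ℤ} {R : ℤ}
    (hle : ∀ j, w j ≤ R) (hsum : ∑ j, w j = Fintype.card κ * R - 1) : ∃ j, w j = R - 1 := by
  have hdeficit : ∑ j, (R - w j) = 1 := by simp [hsum]
  obtain ⟨j, -, hj⟩ : ∃ j ∈ Finset.univ, R - w j ≠ 0 :=
    Finset.exists_ne_zero_of_sum_ne_zero (by simp [hdeficit])
  have hj_le : R - w j ≤ 1 := hdeficit ▸ Finset.single_le_sum
    (f := fun j => R - w j) (fun l _ => sub_nonneg.2 (hle l)) (Finset.mem_univ j)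
  exact ⟨j, by have := hle j; omega⟩

section Dilate

open scoped Pointwise

variable {n : ℕ}

lemma dilate_eq_smul (k : ℕ) (P : Set (Fin n → ℝ)) : dilate k P = (k : ℝ) • P := rfl

lemma dilate_dilate (t r : ℕ) (P : Set (Fin n → ℝ)) :
    dilate t (dilate r P) = dilate (t * r) P := by
  simp only [dilate_eq_smul, smul_smul, Nat.cast_mul]

lemma IsIDP.exists_int_sum {k : ℕ} {P : Set (Fin n → ℝ)} (h : IsIDP k P) {x : Fin n → ℤ}
    (hx : (fun i => (x i : ℝ)) ∈ dilate k P) :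
    ∃ z : Fin k → Fin n → ℤ, (∀ j, (fun i => (z j i : ℝ)) ∈ P) ∧ x = ∑ j, z j := by
  obtain ⟨f, hf, hsum⟩ := h _ hx fun i => ⟨x i, rfl⟩
  choose hfP z hz using hf
  refine ⟨z, fun j => funext (hz j) ▸ hfP j, funext fun i => ?_⟩
  have hi := congrFun hsum i
  simp only [Finset.sum_apply, hz] at hi ⊢
  exact_mod_cast hi

end Dilate

section RectSimplex

variable {n : ℕ} {p b : Fin n → ℕ} {r t : ℕ}

lemma rectSimplex_subset (hp : ∀ i, 0 < p i) :
    rectSimplex p ⊆ {x | 0 ≤ x ∧ ∑ i, x i / (p i : ℝ) ≤ 1} := by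
  have hlin : IsLinearMap ℝ fun x : Fin n → ℝ => ∑ i, x i / (p i : ℝ) :=
    { map_add := fun x y => by simp only [Pi.add_apply, add_div, Finset.sum_add_distrib]
      map_smul := fun c x => by
        simp only [Pi.smul_apply, smul_eq_mul, mul_div_assoc, Finset.mul_sum] }
  refine convexHull_min ?_ ((convex_Ici 0).inter (convex_halfSpace_le hlin 1))
  rintro _ (rfl | ⟨i, rfl⟩)
  · simp
  · have hpi : (p i : ℝ) ≠ 0 := by exact_mod_cast (hp i).ne'
    refine ⟨Pi.single_nonneg.2 (Nat.cast_nonneg _), le_of_eq ?_⟩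
    simp only [Pi.single_apply, ite_div, zero_div, Finset.sum_ite_eq', Finset.mem_univ, if_true,
      div_self hpi]

lemma mem_rectSimplex_iff (hp : ∀ i, 0 < p i) {x : Fin n → ℝ} :
    x ∈ rectSimplex p ↔ 0 ≤ x ∧ ∑ i, x i / (p i : ℝ) ≤ 1 := by
  refine ⟨fun hx => rectSimplex_subset hp hx, fun ⟨hx0, hx1⟩ => ?_⟩
  refine mem_convexHull_of_exists_fintype
    (fun o : Option (Fin n) => o.elim (1 - ∑ i, x i / (p i : ℝ)) fun i => x i / (p i : ℝ))
    (fun o => o.elim 0 fun i => Pi.single i (p i : ℝ)) ?_ ?_ ?_ ?_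
  · rintro (_ | i)
    · exact sub_nonneg.2 hx1
    · exact div_nonneg (hx0 i) (Nat.cast_nonneg _)
  · simp [Fintype.sum_option]
  · rintro (_ | i)
    · exact Set.mem_insert _ _
    · exact Set.mem_insert_of_mem _ ⟨i, rfl⟩
  · have hcancel : ∀ i, x i / (p i : ℝ) * p i = x i := fun i =>
      div_mul_cancel₀ _ (by exact_mod_cast (hp i).ne')
    simp only [Fintype.sum_option, Option.elim, smul_zero, zero_add, ← Pi.single_smul',
      smul_eq_mul, hcancel, Finset.univ_sum_single]

lemma mem_dilate_rectSimplex_iff (hp : ∀ i, 0 < p i) (hr : 0 < r) {x : Fin n → ℝ} :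
    x ∈ dilate r (rectSimplex p) ↔ 0 ≤ x ∧ ∑ i, x i / (p i : ℝ) ≤ r := by
  have hr' : (0 : ℝ) < r := by exact_mod_cast hr
  rw [dilate_eq_smul, Set.mem_smul_set_iff_inv_smul_mem₀ hr'.ne', mem_rectSimplex_iff hp,
    smul_nonneg_iff_nonneg_of_pos_left (inv_pos.2 hr')]
  simp only [Pi.smul_apply, smul_eq_mul, mul_div_assoc, ← Finset.mul_sum]
  rw [inv_mul_le_iff₀ hr', mul_one]

lemma intCast_mem_dilate_rectSimplex_iff (hp : ∀ i, 0 < p i) (hr : 0 < r) {z : Fin n → ℤ} :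
    (fun i => (z i : ℝ)) ∈ dilate r (rectSimplex p) ↔
      0 ≤ z ∧ facetForm p z ≤ r * ∏ i, (p i : ℤ) := by
  have hprod : (0 : ℝ) < ∏ i, (p i : ℝ) := Finset.prod_pos fun i _ => by exact_mod_cast hp i
  rw [mem_dilate_rectSimplex_iff hp hr, sum_div_eq_facetForm_div_prod hp, div_le_iff₀ hprod]
  refine and_congr (forall_congr' fun i => Int.cast_nonneg_iff) ?_
  exact_mod_cast Iff.rfl

lemma not_isIDP_dilate_rectSimplex (hr : 0 < r) (k : Fin n) (hbp : ∀ i, b i < p i)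
    (hb : ∀ i, (b i : ℤ) * cofactor p i ≡ -1 [ZMOD p i])
    (ht : facetForm p (fun i => b i) = t * ∏ i, (p i : ℤ) - 1) (hrt : r < t) :
    ¬ IsIDP t (dilate r (rectSimplex p)) := by
  intro hIDP
  have hp : ∀ i, 0 < p i := fun i => Nat.zero_lt_of_lt (hbp i)
  obtain ⟨x, hx0, hx⟩ :=
    exists_nonneg_facetForm_eq_mul_prod_sub_one k ht (Nat.le_mul_of_pos_right t hr)
  have hxmem : (fun i => (x i : ℝ)) ∈ dilate t (dilate r (rectSimplex p)) := by
    rw [dilate_dilate, intCast_mem_dilate_rectSimplex_iff hp (Nat.mul_pos (by omega) hr)]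
    exact ⟨hx0, by omega⟩
  obtain ⟨z, hz, rfl⟩ := hIDP.exists_int_sum hxmem
  simp only [intCast_mem_dilate_rectSimplex_iff hp hr] at hz
  obtain ⟨j, hj⟩ : ∃ j, facetForm p (z j) = r * ∏ i, (p i : ℤ) - 1 := by
    refine exists_eq_sub_one_of_sum_eq (fun j => (hz j).2) ?_
    rw [← map_sum, hx, Fintype.card_fin, Nat.cast_mul, mul_assoc]
  exact facetForm_ne_mul_prod_sub_one hbp hb ht hrt (hz j).1 hj

theorem stmt_16_general (hr : 1 ≤ r) (hbp : ∀ i, b i < p i)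
    (hb : ∀ i, Int.ModEq (p i) ((b i : ℤ) * ∏ j ∈ Finset.univ.erase i, (p j : ℤ)) (-1))
    (hrb : (r : ℝ) ≤ ∑ i, (b i : ℝ) / (p i : ℝ)) :
    ¬ IsNormal (dilate r (rectSimplex p)) := by
  have hp : ∀ i, 0 < p i := fun i => Nat.zero_lt_of_lt (hbp i)
  have hprod : 0 < ∏ i, (p i : ℤ) := Finset.prod_pos fun i _ => by exact_mod_cast hp i
  have hsum_pos : (0 : ℝ) < ∑ i, (b i : ℝ) / p i := (Nat.cast_pos.2 hr).trans_le hrb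
  obtain ⟨k, -, -⟩ := Finset.exists_ne_zero_of_sum_ne_zero hsum_pos.ne'
  obtain ⟨m, hm⟩ := prod_dvd_facetForm_add_one hb
  have hr_mul_le : (r : ℤ) * ∏ i, (p i : ℤ) ≤ facetForm p fun i => b i := by
    have hprodR : (0 : ℝ) < ∏ i, (p i : ℝ) := by exact_mod_cast hprod
    have hdiv := sum_div_eq_facetForm_div_prod hp fun i => (b i : ℤ)
    simp only [Int.cast_natCast] at hdiv
    rw [hdiv, le_div_iff₀ hprodR] at hrb
    exact_mod_cast hrb
  have hrm : (r : ℤ) < m := lt_of_mul_lt_mul_left (by linarith) hprod.le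
  lift m to ℕ using by omega
  exact fun hnorm => not_isIDP_dilate_rectSimplex hr k hbp hb (t := m) (by linarith)
    (by exact_mod_cast hrm) (hnorm m (by omega))

end RectSimplex

/-- Let `p₁, …, pₙ` be distinct primes, `1 ≤ r ≤ n - 2`, and for
each `i` let `bᵢ` be the unique integer in `[0, pᵢ)` with
`bᵢ · ∏_{j ≠ i} pⱼ ≡ -1 (mod pᵢ)`. If for some `k` we have `bᵢ = pᵢ - 1` for all
`i ≠ k` and `∑_{i ≠ k} 1/pᵢ ≤ 1`, then `rΔ(p₁, …, pₙ)` is not normal. -/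
theorem stmt_16 (n : ℕ) (hn : 3 ≤ n) (r : ℕ) (hr1 : 1 ≤ r) (hr2 : r ≤ n - 2)
    (p : Fin n → ℕ) (hp : ∀ i, (p i).Prime) (hinj : Function.Injective p)
    (b : Fin n → ℕ) (hb : ∀ i, b i < p i)
    (hbmod : ∀ i, Int.ModEq (p i)
      ((b i : ℤ) * ∏ j ∈ Finset.univ.erase i, (p j : ℤ)) (-1))
    (hk : ∃ k, (∀ i, i ≠ k → b i = p i - 1) ∧
      ∑ i ∈ Finset.univ.erase k, (1 : ℝ) / (p i : ℝ) ≤ 1) :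
    ¬ IsNormal (dilate r (rectSimplex p)) := by
  obtain ⟨k, hbk, hsum⟩ := hk
  have hn2 : (r : ℝ) ≤ Fintype.card (Fin n) - 2 := by
    rw [Fintype.card_fin, le_sub_iff_add_le]
    exact_mod_cast (by omega : r + 2 ≤ n)
  exact stmt_16_general hr1 hb hbmod
    (hn2.trans (card_sub_two_le_sum_div (fun i _ => (hp i).pos) hbk hsum))
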